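/- Let d and m be positive integers with 37·d < 117·m. Then there exist ten points p₁, …, p₁₀ in ℂ³ ∖ {0}, pairwise non-proportional (i.e. representing ten distinct points of the projective plane ℙ²(ℂ)), such that the only homogeneous polynomial F ∈ ℂ[x₀,x₁,x₂] of degree d all of whose partial derivatives of order at most m−1 vanish at every pᵢ is the zero polynomial. (Equivalently: the linear system 𝓛_d(m^10) of plane curves of degree d with ten general base points of multiplicity m is empty whenever d/m < 117/37.) -/

import Mathlib

open MvPolynomial

/-- `VanishToOrder F m p` : all iterated partial derivatives of `F` of total order
at most `m - 1` vanish at the point `p ∈ ℂ³`. -/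
def VanishToOrder (F : MvPolynomial (Fin 3) ℂ) (m : ℕ) (p : Fin 3 → ℂ) : Prop :=
  ∀ L : List (Fin 3), L.length < m →
    eval p (L.foldr (fun i G => pderiv i G) F) = 0

namespace Polynomial
open scoped Polynomial

/-- A multiplicative decreasing filtration coming from a discrete valuation. -/
structure TPFilt {R : Type*} [CommRing R] (F : ℤ → AddSubgroup R) : Prop where
  anti : ∀ k l, k ≤ l → F l ≤ F k
  one : (1 : R) ∈ F 0
  mul : ∀ k l a b, a ∈ F k → b ∈ F l → a * b ∈ F (k + l)
  prime : ∀ k l a b, a ∉ F (k + 1) → b ∉ F (l + 1) → a * b ∉ F (k + l + 1)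
  exh : ∀ a, ∃ k, a ∈ F k

/-- Weighted (Gauss) extension of a filtration to polynomials. -/
def TPW {R : Type*} [CommRing R] (F : ℤ → AddSubgroup R) (s k : ℤ) (p : R[X]) : Prop :=
  ∀ j : ℕ, p.coeff j ∈ F (k - s * j)

section
variable {R : Type*} [CommRing R] {F : ℤ → AddSubgroup R}

lemma TPW_anti (hF : TPFilt F) {s k l : ℤ} (h : k ≤ l) {p : R[X]} (hp : TPW F s l p) : TPW F s k p :=
  fun j => hF.anti _ _ (by linarith) (hp j)

lemma TPW_exh (hF : TPFilt F) (s : ℤ) (p : R[X]) : ∃ k, TPW F s k p := by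
  choose κ hκ using fun j => hF.exh (p.coeff j)
  refine ⟨-∑ j ∈ p.support, |κ j + s * j|, fun j => ?_⟩
  by_cases hj : j ∈ p.support
  · refine hF.anti _ _ ?_ (hκ j)
    have h1 := Finset.single_le_sum (f := fun j : ℕ => |κ j + s * j|)
      (fun i _ => abs_nonneg _) hj
    have h2 := neg_abs_le (κ j + s * j)

    linarith
  · rw [notMem_support_iff.mp hj]; exact zero_mem _

lemma TPW_top (hF : TPFilt F) (s k : ℤ) (p : R[X]) (h : ¬ TPW F s (k + 1) p) :
    ∃ k0 ≤ k, TPW F s k0 p ∧ ¬ TPW F s (k0 + 1) p := by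
  obtain ⟨l, hl⟩ := TPW_exh hF s p
  have hlk : l ≤ k := by
    by_contra hc
    exact h (TPW_anti hF (by lia) hl)
  have key : ∀ r : ℕ, TPW F s (k - r) p →
      ∃ k0 ≤ k, TPW F s k0 p ∧ ¬ TPW F s (k0 + 1) p := by
    intro r
    induction r with
    | zero => intro h'; exact ⟨k, le_rfl, by simpa using h', h⟩
    | succ r ih =>
      intro h'
      by_cases hc : TPW F s (k - r) p
      · exact ih hc
      · refine ⟨k - (r + 1 : ℕ), by lia, h', ?_⟩
        have : k - ((r + 1 : ℕ) : ℤ) + 1 = k - r := by push_cast; ring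
        rwa [this]
  refine key (k - l).toNat ?_
  have : k - ((k - l).toNat : ℤ) = l := by lia
  rwa [this]

lemma TPW_prime (hF : TPFilt F) (s k l : ℤ) (p q : R[X]) (hp : ¬ TPW F s (k + 1) p)
    (hq : ¬ TPW F s (l + 1) q) : ¬ TPW F s (k + l + 1) (p * q) := by
  classical
  obtain ⟨k0, hk, hp1, hp2⟩ := TPW_top hF s k p hp
  obtain ⟨l0, hl, hq1, hq2⟩ := TPW_top hF s l q hq
  intro hpq
  have hpq' : TPW F s (k0 + l0 + 1) (p * q) := TPW_anti hF (by linarith) hpq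
  unfold TPW at hp2 hq2
  push Not at hp2 hq2
  let i0 := Nat.find hp2
  let j0 := Nat.find hq2
  have hi0 : p.coeff i0 ∉ F (k0 + 1 - s * i0) := Nat.find_spec hp2
  have hj0 : q.coeff j0 ∉ F (l0 + 1 - s * j0) := Nat.find_spec hq2
  have hi : ∀ i < i0, p.coeff i ∈ F (k0 + 1 - s * i) := fun i h => by
    by_contra hc; exact Nat.find_min hp2 h hc
  have hj : ∀ j < j0, q.coeff j ∈ F (l0 + 1 - s * j) := fun i h => by
    by_contra hc; exact Nat.find_min hq2 h hc
  have hsum := hpq' (i0 + j0)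
  rw [coeff_mul, ← Finset.add_sum_erase _ _
    (show (i0, j0) ∈ Finset.HasAntidiagonal.antidiagonal (i0 + j0) by simp)] at hsum
  have hrest : ∑ x ∈ (Finset.HasAntidiagonal.antidiagonal (i0 + j0)).erase (i0, j0),
      p.coeff x.1 * q.coeff x.2 ∈ F (k0 + l0 + 1 - s * ((i0 + j0 : ℕ) : ℤ)) := by
    refine sum_mem fun x hx => ?_
    rw [Finset.mem_erase, Finset.HasAntidiagonal.mem_antidiagonal] at hx
    obtain ⟨hne, hx⟩ := hx
    rw [← hx]
    rcases lt_trichotomy x.1 i0 with h | h | h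
    · have := hF.mul _ _ _ _ (hi _ h) (hq1 x.2)
      convert this using 2
      push_cast; ring
    · exact absurd (Prod.ext h (by simp only; lia)) hne
    · have := hF.mul _ _ _ _ (hp1 x.1) (hj x.2 (by lia))
      convert this using 2
      push_cast; ring
  have hmain := (F _).sub_mem hsum hrest
  rw [add_sub_cancel_right] at hmain
  refine hF.prime (k0 - s * i0) (l0 - s * j0) (p.coeff i0) (q.coeff j0) ?_ ?_ ?_
  · convert hi0 using 2; ring_nf
  · convert hj0 using 2; ring_nf
  · convert hmain using 2; push_cast; ring

lemma TPW_div (hF : TPFilt F) (s k c : ℤ) (p q : R[X]) (hp : ¬ TPW F s (k + 1) p)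
    (hpq : TPW F s (k + c) (p * q)) : TPW F s c q := by
  by_contra hc
  refine TPW_prime hF s k (c - 1) p q hp (by simpa using hc) ?_
  convert hpq using 1; ring

lemma TP_prod (hF : TPFilt F) {ι : Type*} (S : Finset ι) (w : ι → ℤ) (a : ι → R) (h : ∀ i ∈ S, a i ∈ F (w i)) :
    ∏ i ∈ S, a i ∈ F (∑ i ∈ S, w i) := by
  classical
  induction S using Finset.induction_on with
  | empty => simpa using hF.one
  | insert i S hi ih =>
    rw [Finset.prod_insert hi, Finset.sum_insert hi]
    exact hF.mul _ _ _ _ (h _ (by simp)) (ih fun j hj => h j (by simp [hj]))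

lemma TP_det (hF : TPFilt F) {N : ℕ} (A : Matrix (Fin N) (Fin N) R) (r c : Fin N → ℤ)
    (h : ∀ i j, A i j ∈ F (r j - c i)) : A.det ∈ F (∑ j, r j - ∑ i, c i) := by
  rw [Matrix.det_apply]
  refine sum_mem fun σ _ => ?_
  have : ∏ i, A (σ i) i ∈ F (∑ j, r j - ∑ i, c i) := by
    have := TP_prod hF Finset.univ (fun i => r i - c (σ i)) (fun i => A (σ i) i)
      (fun i _ => h _ _)
    rwa [Finset.sum_sub_distrib, Equiv.sum_comp σ c] at this
  rw [Units.smul_def]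
  exact zsmul_mem this _

lemma TP_res (hF : TPFilt F) (p q : R[X]) (m n : ℕ) (u v c : ℕ → ℤ)
    (hp : ∀ i j : ℕ, j ≤ i → p.coeff (i - j) ∈ F (u j - c i))
    (hq : ∀ i j : ℕ, j ≤ i → q.coeff (i - j) ∈ F (v j - c i)) :
    resultant p q m n ∈ F (∑ j ∈ Finset.range n, u j + ∑ j ∈ Finset.range m, v j
      - ∑ i ∈ Finset.range (m + n), c i) := by
  have := TP_det hF (sylvester p q m n)
    (fun j => Fin.addCases (fun j₁ : Fin m => v j₁) (fun j₁ : Fin n => u j₁) j) (fun i => c i) ?_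
  · rw [Fin.sum_univ_add] at this
    simp only [Fin.addCases_left, Fin.addCases_right] at this
    rw [Fin.sum_univ_eq_sum_range (fun i => v i), Fin.sum_univ_eq_sum_range (fun i => u i),
      Fin.sum_univ_eq_sum_range (fun i => c i), add_comm (∑ i ∈ Finset.range m, v i)] at this
    exact this
  · intro i j
    induction j using Fin.addCases with
    | left j =>
      simp only [sylvester, Matrix.of_apply, Fin.addCases_left]
      split_ifs with hh
      · exact hq _ _ hh.1
      · exact zero_mem _
    | right j =>
      simp only [sylvester, Matrix.of_apply, Fin.addCases_right]
      split_ifs with hh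
      · exact hp _ _ hh.1
      · exact zero_mem _
end

/-- Filtration by order of divisibility. -/
def TPord {R : Type*} [CommRing R] (π : R) (k : ℤ) : AddSubgroup R :=
  (Ideal.span {π ^ k.toNat}).toAddSubgroup

lemma mem_TPord {R : Type*} [CommRing R] (π : R) (k : ℤ) (a : R) :
    a ∈ TPord π k ↔ π ^ k.toNat ∣ a := by
  simp [TPord, Ideal.mem_span_singleton]

lemma TPord_filt {R : Type*} [CommRing R] [IsDomain R] (π : R) (hπ : Prime π) :
    TPFilt (TPord π) where
  anti k l h a ha := by
    rw [mem_TPord] at *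
    exact (pow_dvd_pow _ (by lia)).trans ha
  one := by rw [mem_TPord]; simp
  mul k l a b ha hb := by
    rw [mem_TPord] at *
    exact (pow_dvd_pow _ (by lia)).trans (pow_add π _ _ ▸ mul_dvd_mul ha hb)
  prime k l a b ha hb hab := by
    rw [mem_TPord] at *
    have hk : 0 ≤ k := by
      by_contra hc
      rw [show (k + 1).toNat = 0 by lia] at ha; simp at ha
    have hl : 0 ≤ l := by
      by_contra hc
      rw [show (l + 1).toNat = 0 by lia] at hb; simp at hb
    lift k to ℕ using hk
    lift l to ℕ using hl
    have e1 : ((k : ℤ) + 1).toNat = k + 1 := by lia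
    have e2 : ((l : ℤ) + 1).toNat = l + 1 := by lia
    have e3 : ((k : ℤ) + l + 1).toNat = k + l + 1 := by lia
    rw [e1] at ha; rw [e2] at hb; rw [e3] at hab
    have h1 : emultiplicity π a < (k + 1 : ℕ) := by
      rwa [← not_le, ← pow_dvd_iff_le_emultiplicity]
    have h2 : emultiplicity π b < (l + 1 : ℕ) := by
      rwa [← not_le, ← pow_dvd_iff_le_emultiplicity]
    have h3 := pow_dvd_iff_le_emultiplicity.mp hab
    rw [emultiplicity_mul hπ] at h3
    lift emultiplicity π a to ℕ using (ne_top_of_lt h1) with x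
    lift emultiplicity π b to ℕ using (ne_top_of_lt h2) with y
    norm_cast at h1 h2 h3
    lia
  exh a := ⟨0, by rw [mem_TPord]; simp⟩

/-- Filtration by (minus the) degree. -/
def TPdeg (K : Type*) [Field K] (k : ℤ) : AddSubgroup K[X] where
  carrier := {a | ∀ i : ℕ, 0 < i + k → a.coeff i = 0}
  zero_mem' := by simp
  add_mem' := by
    intro a b ha hb i hi
    rw [coeff_add, ha i hi, hb i hi, add_zero]
  neg_mem' := by
    intro a ha i hi
    rw [coeff_neg, ha i hi, neg_zero]

lemma mem_TPdeg {K : Type*} [Field K] (k : ℤ) (a : K[X]) :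
    a ∈ TPdeg K k ↔ ∀ i : ℕ, 0 < i + k → a.coeff i = 0 := Iff.rfl

lemma TPdeg_filt (K : Type*) [Field K] : TPFilt (TPdeg K) where
  anti k l h a ha i hi := ha i (by lia)
  one := by
    intro i hi
    rw [coeff_one, if_neg (by lia)]
  mul k l a b ha hb i hi := by
    rw [coeff_mul]
    refine Finset.sum_eq_zero fun x hx => ?_
    rw [Finset.HasAntidiagonal.mem_antidiagonal] at hx
    rcases lt_or_ge 0 (x.1 + k) with h | h
    · rw [ha _ h, zero_mul]
    · rw [hb _ (by lia), mul_zero]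
  prime k l a b ha hb hab := by
    simp only [mem_TPdeg, not_forall] at ha hb
    obtain ⟨i, hi, hia⟩ := ha
    obtain ⟨j, hj, hjb⟩ := hb
    have h1 := le_natDegree_of_ne_zero hia
    have h2 := le_natDegree_of_ne_zero hjb
    have ha0 : a ≠ 0 := by rintro rfl; simp at hia
    have hb0 : b ≠ 0 := by rintro rfl; simp at hjb
    have h3 := hab (natDegree (a * b)) (by rw [natDegree_mul ha0 hb0]; push_cast; lia)
    rw [coeff_natDegree, leadingCoeff_eq_zero] at h3
    exact (mul_ne_zero ha0 hb0) h3
  exh a := ⟨-(natDegree a), fun i hi => coeff_eq_zero_of_natDegree_lt (by lia)⟩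

lemma TPsum_min (s k r : ℕ) : 2 * ∑ j ∈ Finset.range (k + r), min ((s : ℤ) + j) (s + k)
    = 2 * s * k + k * (k - 1) + 2 * r * (s + k) := by
  induction r with
  | zero =>
    have : ∑ j ∈ Finset.range (k + 0), min ((s : ℤ) + j) (s + k)
        = ∑ j ∈ Finset.range k, ((s : ℤ) + j) := by
      refine Finset.sum_congr rfl fun j hj => ?_
      have := Finset.mem_range.mp hj
      rw [min_eq_left]; lia
    rw [this]
    clear this
    induction k with
    | zero => simp
    | succ k ih => rw [Finset.sum_range_succ, mul_add, ih]; push_cast; ring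
  | succ r ih =>
    rw [← add_assoc, Finset.sum_range_succ, mul_add, ih, min_eq_right (by push_cast; lia)]
    push_cast; ring

lemma TPsum_max (a r : ℕ) : 2 * ∑ j ∈ Finset.range (a + r), max (j : ℤ) a
    = 2 * a * a + 2 * a * r + r * (r - 1) := by
  induction r with
  | zero =>
    have : ∑ j ∈ Finset.range (a + 0), max (j : ℤ) a = ∑ j ∈ Finset.range a, (a : ℤ) := by
      refine Finset.sum_congr rfl fun j hj => ?_
      have := Finset.mem_range.mp hj
      rw [max_eq_right]; lia
    rw [this]; simp; ring
  | succ r ih =>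
    rw [← add_assoc, Finset.sum_range_succ, mul_add, ih, max_eq_left (by push_cast; lia)]
    push_cast; ring

end Polynomial

namespace Polynomial
open scoped Polynomial

lemma TP_bezout {K : Type*} [Field K] (n f : K[X][X]) (π h : K[X])
    (hmon : n.Monic) (hdeg : n.natDegree = 111)
    (hirr : Irreducible n) (hπ : Irreducible π) (hπ9 : π.natDegree = 9)
    (hn1 : TPW (TPdeg K) (-1) (-111) n) (hn2 : TPW (TPdeg K) 0 (-75) n)
    (hn3 : TPW (TPord π) 1 35 (taylor h n))
    (d a b : ℕ) (hf1 : TPW (TPdeg K) (-1) (-d) f) (hf2 : TPW (TPdeg K) 0 (a - d) f)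
    (hf3 : TPW (TPord π) 1 b (taylor h f)) (had : a ≤ d) (hbd : b ≤ d)
    (hlt : 111 * d < 36 * a + 315 * b) (hf0 : f ≠ 0) : n ∣ f := by
  have hfd : f.natDegree ≤ d := by
    refine natDegree_le_iff_coeff_eq_zero.mpr fun j hj => ?_
    ext i
    exact hf1 j i (by lia)
  obtain ⟨r, hr⟩ := Nat.exists_eq_add_of_le hfd
  have hc1 : n.coeff 111 = 1 := by rw [← hdeg]; exact hmon
  have hc2 : (taylor h n).coeff 111 = 1 := by
    rw [← hdeg, coeff_taylor_natDegree]
    exact hmon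
  have e1 : resultant n f 111 d = resultant n f := by
    rw [hr, resultant_add_right_deg _ _ _ _ _ le_rfl, hc1, one_pow, one_mul, hdeg]
  have e2 : resultant (taylor h n) (taylor h f) 111 d = resultant n f := by
    rw [hr, resultant_add_right_deg _ _ _ _ _ (natDegree_taylor f h).le, hc2, one_pow, one_mul,
      ← resultant_taylor n f h, natDegree_taylor, natDegree_taylor, hdeg]
  have hD := TPdeg_filt K
  have hO := TPord_filt π hπ.prime
  have b1 := TP_res hD n f 111 d (fun j => -(111 + max (j : ℤ) a)) (fun j => -(d + max (j : ℤ) 36))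
    (fun i => - max (i : ℤ) (36 + a)) ?_ ?_
  rotate_left
  · intro i j hij
    rcases le_or_gt ((36 : ℤ) + a) i with h | h
    · refine hD.anti _ _ ?_ (hn1 (i - j))
      have := le_max_left (j : ℤ) a
      rw [max_eq_left h]
      lia
    · refine hD.anti _ _ ?_ (hn2 (i - j))
      have := le_max_right (j : ℤ) a
      rw [max_eq_right h.le]
      lia
  · intro i j hij
    rcases le_or_gt ((36 : ℤ) + a) i with h | h
    · refine hD.anti _ _ ?_ (hf1 (i - j))
      have := le_max_left (j : ℤ) 36
      rw [max_eq_left h]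
      lia
    · refine hD.anti _ _ ?_ (hf2 (i - j))
      have := le_max_right (j : ℤ) 36
      rw [max_eq_right h.le]
      lia
  have b2 := TP_res hO (taylor h n) (taylor h f) 111 d
    (fun j => min ((35 : ℤ) + j) (35 + b)) (fun j => min ((b : ℤ) + j) (b + 35))
    (fun i => min (0 + (i : ℤ)) (0 + (35 + b))) ?_ ?_
  rotate_left
  · intro i j hij
    rcases le_or_gt (i : ℤ) ((35 : ℤ) + b) with h | h
    · refine hO.anti _ _ ?_ (hn3 (i - j))
      have := min_le_left ((35 : ℤ) + j) (35 + b)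
      rw [min_eq_left (a := 0 + (i : ℤ)) (by lia)]
      lia
    · refine hO.anti _ 0 ?_ (by simp [mem_TPord])
      have := min_le_right ((35 : ℤ) + j) (35 + b)
      rw [min_eq_right (a := 0 + (i : ℤ)) (by lia)]
      lia
  · intro i j hij
    rcases le_or_gt (i : ℤ) ((35 : ℤ) + b) with h | h
    · refine hO.anti _ _ ?_ (hf3 (i - j))
      have := min_le_left ((b : ℤ) + j) (b + 35)
      rw [min_eq_left (a := 0 + (i : ℤ)) (by lia)]
      lia
    · refine hO.anti _ 0 ?_ (by simp [mem_TPord])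
      have := min_le_right ((b : ℤ) + j) (b + 35)
      rw [min_eq_right (a := 0 + (i : ℤ)) (by lia)]
      lia
  rw [e1] at b1
  rw [e2] at b2
  have s1 : ∑ j ∈ Finset.range d, (-(111 + max (j : ℤ) a))
      + ∑ j ∈ Finset.range 111, (-(d + max (j : ℤ) 36))
      - ∑ i ∈ Finset.range (111 + d), (- max (i : ℤ) (36 + a)) = -(111 * d - 36 * a) := by
    have t1 := TPsum_max a (d - a)
    have t2 := TPsum_max 36 75
    have t3 := TPsum_max (36 + a) (75 + (d - a))
    rw [show a + (d - a) = d by lia] at t1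
    rw [show 36 + a + (75 + (d - a)) = 111 + d by lia] at t3
    push_cast [Nat.cast_sub had] at t1 t2 t3
    simp only [Finset.sum_neg_distrib, Finset.sum_add_distrib, Finset.sum_const,
      Finset.card_range, nsmul_eq_mul]
    push_cast
    linarith
  have s2 : ∑ j ∈ Finset.range d, min ((35 : ℤ) + j) (35 + b)
      + ∑ j ∈ Finset.range 111, min ((b : ℤ) + j) (b + 35)
      - ∑ i ∈ Finset.range (111 + d), min (0 + (i : ℤ)) (0 + (35 + b)) = 35 * b := by
    have t1 := TPsum_min 35 b (d - b)
    have t2 := TPsum_min b 35 76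
    have t3 := TPsum_min 0 (35 + b) (76 + (d - b))
    rw [show b + (d - b) = d by lia] at t1
    rw [show 35 + b + (76 + (d - b)) = 111 + d by lia] at t3
    push_cast [Nat.cast_sub hbd] at t1 t2 t3
    linarith
  rw [s1] at b1
  rw [s2, mem_TPord] at b2
  have hres : resultant n f = 0 := by
    by_contra hne
    have hdeg1 : (resultant n f).natDegree ≤ 111 * d - 36 * a := by
      refine natDegree_le_iff_coeff_eq_zero.mpr fun i hi => b1 i (by lia)
    have hdeg2 := natDegree_le_of_dvd b2 hne
    rw [natDegree_pow, hπ9] at hdeg2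
    lia
  -- pass to the fraction field
  have hinj : Function.Injective (algebraMap K[X] (FractionRing K[X])) :=
    IsFractionRing.injective _ _
  have h1 : resultant (n.map (algebraMap K[X] (FractionRing K[X])))
      (f.map (algebraMap K[X] (FractionRing K[X]))) = 0 := by
    rw [natDegree_map_eq_of_injective hinj, natDegree_map_eq_of_injective hinj,
      resultant_map_map, hres, map_zero]
  rw [resultant_eq_zero_iff] at h1
  have h2 := (hmon.irreducible_iff_irreducible_map_fraction_map (K := FractionRing K[X])).mp hirr
  have h3 : n.map (algebraMap K[X] (FractionRing K[X])) ∣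
      f.map (algebraMap K[X] (FractionRing K[X])) := by
    by_contra hc
    exact h1.2 ((EuclideanDomain.dvd_or_coprime _ _ h2).resolve_left hc)
  exact (map_dvd_map _ hinj hmon).mp h3

theorem TP_nef {K : Type*} [Field K] (n : K[X][X]) (π h : K[X])
    (hmon : n.Monic) (hdeg : n.natDegree = 111)
    (hirr : Irreducible n) (hπ : Irreducible π) (hπ9 : π.natDegree = 9)
    (hn1 : TPW (TPdeg K) (-1) (-111) n) (hn2 : TPW (TPdeg K) 0 (-75) n)
    (hn2' : ¬ TPW (TPdeg K) 0 (-75 + 1) n)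
    (hn3 : TPW (TPord π) 1 35 (taylor h n))
    (hn3' : ¬ TPW (TPord π) 1 (35 + 1) (taylor h n)) :
    ∀ (d a b : ℕ) (f : K[X][X]), TPW (TPdeg K) (-1) (-d) f → TPW (TPdeg K) 0 (a - d) f →
      TPW (TPord π) 1 b (taylor h f) → 111 * d < 36 * a + 315 * b → f = 0 := by
  intro d
  induction d using Nat.strong_induction_on with
  | _ d ih =>
  intro a b f hf1 hf2 hf3 hlt
  by_contra hf0
  have hD := TPdeg_filt K
  have hO := TPord_filt π hπ.prime
  have had : a ≤ d := by
    by_contra hc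
    refine hf0 ?_
    ext j i
    exact hf2 j i (by lia)
  have hfd : f.natDegree ≤ d := by
    refine natDegree_le_iff_coeff_eq_zero.mpr fun j hj => ?_
    ext i
    exact hf1 j i (by lia)
  have hdvd : n ∣ f := by
    rcases le_total b d with hb | hb
    · exact TP_bezout n f π h hmon hdeg hirr hπ hπ9 hn1 hn2 hn3 d a b hf1 hf2 hf3 had hb hlt hf0
    · refine TP_bezout n f π h hmon hdeg hirr hπ hπ9 hn1 hn2 hn3 d a d hf1 hf2
        (TPW_anti hO (by lia) hf3) had le_rfl ?_ hf0
      rcases Nat.eq_zero_or_pos d with rfl | hd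
      · exfalso
        refine hf0 ?_
        have ha : a = 0 := by lia
        subst ha
        have hb : 0 < b := by lia
        have h0 := natDegree_eq_zero.mp (Nat.le_zero.mp hfd)
        obtain ⟨c, rfl⟩ := h0
        have h1 := hf3 0
        rw [taylor_C, coeff_C_zero, mem_TPord] at h1
        have h2 := hf2 0
        rw [coeff_C_zero, mem_TPdeg] at h2
        have hc : c = 0 := by
          by_contra hc
          have h3 := natDegree_le_of_dvd h1 hc
          have h4 : c.natDegree ≤ 0 :=
            natDegree_le_iff_coeff_eq_zero.mpr fun i hi => h2 i (by simpa using hi)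
          rw [natDegree_pow, hπ9] at h3
          lia
        rw [hc, C_0]
      · lia
  obtain ⟨g, rfl⟩ := hdvd
  have hg0 : g ≠ 0 := right_ne_zero_of_mul hf0
  have hd111 : 111 ≤ d := by
    rw [hmon.natDegree_mul' hg0, hdeg] at hfd
    lia
  have hn1' : ¬ TPW (TPdeg K) (-1) (-111 + 1) n := by
    intro hc
    have h1 := hc 111 0 (by norm_num)
    have hc1 : n.coeff 111 = 1 := by rw [← hdeg]; exact hmon
    rw [hc1] at h1
    simp at h1
  have g1 : TPW (TPdeg K) (-1) (-((d - 111 : ℕ) : ℤ)) g := by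
    refine TPW_div hD (-1) (-111) _ n g hn1' ?_
    convert hf1 using 1
    lia
  have g2 : TPW (TPdeg K) 0 (((a - 36 : ℕ) : ℤ) - ((d - 111 : ℕ) : ℤ)) g := by
    rcases le_total a 36 with ha | ha
    · intro j
      refine hD.anti _ _ ?_ (g1 j)
      lia
    · refine TPW_div hD 0 (-75) _ n g hn2' ?_
      convert hf2 using 1
      lia
  have g3 : TPW (TPord π) 1 ((b - 35 : ℕ) : ℤ) (taylor h g) := by
    rcases le_total b 35 with hb | hb
    · intro j
      rw [mem_TPord, show (((b - 35 : ℕ) : ℤ) - 1 * (j : ℤ)).toNat = 0 by lia]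
      simp
    · refine TPW_div hO 1 35 _ (taylor h n) (taylor h g) hn3' ?_
      rw [← taylor_mul]
      convert hf3 using 1
      lia
  exact hg0 (ih (d - 111) (by lia) (a - 36) (b - 35) g g1 g2 g3 (by lia))

end Polynomial

namespace Polynomial
open scoped Polynomial

/-- The polynomial over `𝔽₂` whose coefficients are the binary digits of `k`. -/
noncomputable def tpP (k : ℕ) : (ZMod 2)[X] :=
  ∑ i ∈ Finset.range k, if k.testBit i then X ^ i else 0

lemma tpP_coeff (k i : ℕ) : (tpP k).coeff i = if k.testBit i then 1 else 0 := by
  unfold tpP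
  rw [finsetSum_coeff]
  have : ∀ j ∈ Finset.range k, (if k.testBit j then (X : (ZMod 2)[X]) ^ j else 0).coeff i
      = if j = i then (if k.testBit i then 1 else 0) else 0 := by
    intro j _
    by_cases hj : j = i
    · subst hj; rw [if_pos rfl]; split_ifs <;> simp
    · rw [if_neg hj]; split_ifs <;> simp [coeff_X_pow, Ne.symm hj]
  rw [Finset.sum_congr rfl this, Finset.sum_ite_eq']
  by_cases hi : i ∈ Finset.range k
  · rw [if_pos hi]
  · rw [if_neg hi]
    have h1 : k ≤ i := by simpa using hi
    rw [Nat.testBit_lt_two_pow (lt_of_le_of_lt h1 Nat.lt_two_pow_self)]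
    simp

lemma tpP_xor (a b : ℕ) : tpP (a ^^^ b) = tpP a + tpP b := by
  ext i
  rw [coeff_add, tpP_coeff, tpP_coeff, tpP_coeff, Nat.testBit_xor]
  cases a.testBit i <;> cases b.testBit i <;> simp <;> decide

lemma tpP_shl (a k : ℕ) : tpP (a <<< k) = tpP a * X ^ k := by
  ext i
  rw [coeff_mul_X_pow', tpP_coeff, Nat.testBit_shiftLeft, tpP_coeff]
  by_cases h : k ≤ i <;> simp [h]

lemma tpP_zero : tpP 0 = 0 := by ext i; simp [tpP_coeff]
lemma tpP_one : tpP 1 = 1 := by simp [tpP]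
lemma tpP_two : tpP 2 = X := by
  have := tpP_shl 1 1
  rwa [tpP_one, one_mul, pow_one] at this

lemma tpP_sub (a b : ℕ) : tpP (a ^^^ b) = tpP a - tpP b := by
  rw [tpP_xor]
  ext i
  rw [coeff_add, coeff_sub, CharTwo.sub_eq_add]

lemma tpP_natDegree_lt (a k : ℕ) (h : a < 2 ^ k) (i : ℕ) (hi : k ≤ i) : (tpP a).coeff i = 0 := by
  rw [tpP_coeff, Nat.testBit_lt_two_pow (lt_of_lt_of_le h (Nat.pow_le_pow_right (by norm_num) hi))]
  simp

lemma tpP_natDegree (a k : ℕ) (h : a < 2 ^ (k + 1)) (h2 : a.testBit k = true) :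
    (tpP a).natDegree = k := by
  refine le_antisymm (natDegree_le_iff_coeff_eq_zero.mpr fun i hi => tpP_natDegree_lt a _ h i hi)
    (le_natDegree_of_ne_zero ?_)
  rw [tpP_coeff, h2]; simp

lemma tpP_ne_zero (a : ℕ) (h : a ≠ 0) : tpP a ≠ 0 := by
  obtain ⟨i, hi⟩ := Nat.exists_testBit_of_ne_zero h
  intro hc
  have := tpP_coeff a i
  rw [hc, hi] at this
  simp at this

/-- Force evaluation of a natural number. -/
def tpForce {α : Type} (n : ℕ) (f : ℕ → α) : α :=
  Nat.rec (f 0) (fun k _ => f (k + 1)) n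

lemma tpForce_eq {α : Type} (n : ℕ) (f : ℕ → α) : tpForce n f = f n := by
  cases n <;> rfl

def tpBit (a i : ℕ) : Bool := Nat.beq (Nat.mod (Nat.shiftRight a i) 2) 1

lemma tpBit_eq (a i : ℕ) : tpBit a i = a.testBit i := by
  rw [Nat.testBit_eq_decide_div_mod_eq, ← Nat.shiftRight_eq_div_pow]
  unfold tpBit
  rw [Bool.eq_iff_iff, decide_eq_true_iff, Nat.beq_eq]
  rfl

/-- Carryless product of the lowest `i` bits of `a` with `b`. -/
def tpMul (a b i : ℕ) : ℕ :=
  Nat.rec 0 (fun i r => cond (tpBit a i) (Nat.xor r (Nat.shiftLeft b i)) r) i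

lemma tpMul_aux (a b i : ℕ) : tpP (tpMul a b i) =
    (∑ j ∈ Finset.range i, if a.testBit j then X ^ j else 0) * tpP b := by
  induction i with
  | zero => simp [tpMul, tpP_zero]
  | succ i ih =>
    have : tpMul a b (i + 1) = cond (tpBit a i) (tpMul a b i ^^^ b <<< i) (tpMul a b i) := rfl
    rw [this, tpBit_eq, Finset.sum_range_succ, add_mul, ← ih]
    cases a.testBit i
    · simp
    · simp only [cond_true, tpP_xor, tpP_shl, if_true]; ring

lemma tpMul_eq (a b i : ℕ) (h : a < 2 ^ i) : tpP (tpMul a b i) = tpP a * tpP b := by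
  rw [tpMul_aux]
  congr 1
  ext k
  rw [tpP_coeff, finsetSum_coeff]
  have : ∀ j ∈ Finset.range i, (if a.testBit j then (X : (ZMod 2)[X]) ^ j else 0).coeff k
      = if j = k then (if a.testBit k then 1 else 0) else 0 := by
    intro j _
    by_cases hj : j = k
    · subst hj; rw [if_pos rfl]; split_ifs <;> simp
    · rw [if_neg hj]; split_ifs <;> simp [coeff_X_pow, Ne.symm hj]
  rw [Finset.sum_congr rfl this, Finset.sum_ite_eq']
  by_cases hi : k ∈ Finset.range i
  · rw [if_pos hi]
  · rw [if_neg hi, Nat.testBit_lt_two_pow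
      (lt_of_lt_of_le h (Nat.pow_le_pow_right (by norm_num) (by simpa using hi)))]
    simp

/-- Reduction modulo `m` (of degree `dg`), removing bits `dg + i - 1, …, dg`. -/
def tpRem (m dg i s : ℕ) : ℕ :=
  Nat.rec (motive := fun _ => ℕ → ℕ) (fun s => s)
    (fun i k s => tpForce (cond (tpBit s (Nat.add i dg)) (Nat.xor s (Nat.shiftLeft m i)) s) k) i s

lemma tpRem_dvd (m dg i s : ℕ) : tpP m ∣ tpP s - tpP (tpRem m dg i s) := by
  induction i generalizing s with
  | zero => simp [tpRem]
  | succ i ih =>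
    have : tpRem m dg (i + 1) s =
      tpForce (cond (tpBit s (i + dg)) (s ^^^ (m <<< i)) s) (tpRem m dg i) := rfl
    rw [this, tpForce_eq]
    cases tpBit s (i + dg)
    · exact ih s
    · have h := ih (s ^^^ (m <<< i))
      rw [cond_true]
      rw [tpP_sub, tpP_shl] at h
      have h2 := dvd_add h (dvd_mul_right (tpP m) (X ^ i))
      convert h2 using 1
      rw [← tpP_shl]
      ring

/-- Euclid's algorithm. -/
def tpGcd (k a b : ℕ) : ℕ :=
  Nat.rec (motive := fun _ => ℕ → ℕ → ℕ) (fun a _ => a)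
    (fun _ r a b => cond (Nat.beq b 0) a
      (tpForce (tpRem b (Nat.log2 b) (Nat.add 1 (Nat.sub (Nat.log2 a) (Nat.log2 b))) a)
        (fun c => r b c))) k a b

lemma tpGcd_dvd (g : (ZMod 2)[X]) (k a b : ℕ) (ha : g ∣ tpP a) (hb : g ∣ tpP b) :
    g ∣ tpP (tpGcd k a b) := by
  induction k generalizing a b with
  | zero => exact ha
  | succ k ih =>
    have : tpGcd (k + 1) a b = cond (Nat.beq b 0) a
      (tpForce (tpRem b (Nat.log2 b) (1 + (Nat.log2 a - Nat.log2 b)) a)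
        (fun c => tpGcd k b c)) := rfl
    rw [this, tpForce_eq]
    cases Nat.beq b 0
    · refine ih _ _ hb ?_
      have h1 := hb.trans (tpRem_dvd b (Nat.log2 b) (1 + (Nat.log2 a - Nat.log2 b)) a)
      simpa using dvd_sub ha h1
    · exact ha

/-- `X ^ (2 ^ k)` modulo `f` of degree `dg`. -/
def tpFrob (f dg k : ℕ) : ℕ :=
  Nat.rec 2 (fun _ r => tpForce r (fun r => tpForce (tpMul r r (Nat.add (Nat.log2 r) 1))
    (tpRem f dg dg))) k

lemma tpFrob_dvd (f dg k : ℕ) : tpP f ∣ X ^ (2 ^ k) - tpP (tpFrob f dg k) := by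
  induction k with
  | zero => simp [tpFrob, tpP_two]
  | succ k ih =>
    have : tpFrob f dg (k + 1) =
      tpForce (tpFrob f dg k) (fun r => tpForce (tpMul r r (Nat.log2 r + 1))
        (tpRem f dg dg)) := rfl
    rw [this, tpForce_eq, tpForce_eq]
    have h2 := tpRem_dvd f dg dg (tpMul (tpFrob f dg k) (tpFrob f dg k)
      (Nat.log2 (tpFrob f dg k) + 1))
    rw [tpMul_eq _ _ _ Nat.lt_log2_self] at h2
    have h3 := dvd_add (ih.mul_right (X ^ (2 ^ k) + tpP (tpFrob f dg k))) h2
    convert h3 using 1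
    rw [pow_succ]
    ring

lemma tp_irr (f n : ℕ) (hn : 0 < n) (hlt : f < 2 ^ (n + 1)) (hb : f.testBit n = true)
    (h1 : tpFrob f n n = 2) (S : List ℕ)
    (hS : ∀ k ∈ S, tpGcd (2 * n) f (Nat.xor (tpFrob f n k) 2) = 1)
    (hdiv : ∀ e, e ∣ n → (∀ k ∈ S, ¬ e ∣ k) → e = n) : Irreducible (tpP f) := by
  have hdeg := tpP_natDegree f n hlt hb
  have hf0 : tpP f ≠ 0 := by
    intro hc; rw [hc] at hdeg; simp at hdeg; lia
  obtain ⟨g, hg, hgf⟩ := exists_irreducible_of_natDegree_pos (f := tpP f) (by lia)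
  have hcard : Nat.card (ZMod 2) = 2 := by simp
  have hgn : g.natDegree ∣ n := by
    refine hg.natDegree_dvd_of_dvd_X_pow_card_pow_sub_X ?_
    have := tpFrob_dvd f n n
    rw [h1, tpP_two] at this
    rw [hcard]
    exact hgf.trans this
  have hgk : ∀ k ∈ S, ¬ g.natDegree ∣ k := by
    intro k hk hd
    have h2 := (hg.natDegree_dvd_iff_dvd_X_pow_card_pow_sub_X).mp hd
    rw [hcard] at h2
    have h3 := hgf.trans (tpFrob_dvd f n k)
    have h4 : g ∣ tpP (Nat.xor (tpFrob f n k) 2) := by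
      have h5 : tpP (Nat.xor (tpFrob f n k) 2) = tpP (tpFrob f n k) - X := by
        rw [← tpP_two]; exact tpP_sub _ _
      rw [h5]
      have := dvd_sub h2 h3
      simpa using this
    have h6 := tpGcd_dvd g (2 * n) _ _ hgf h4
    rw [hS k hk, tpP_one] at h6
    exact hg.not_isUnit (isUnit_of_dvd_one h6)
  have he := hdiv _ hgn hgk
  obtain ⟨q, hq⟩ := hgf
  have hq0 : q ≠ 0 := by rintro rfl; simp at hq; exact hf0 hq
  rw [hq, natDegree_mul hg.ne_zero hq0] at hdeg
  have hqu : IsUnit q := by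
    rw [isUnit_iff_degree_eq_zero, degree_eq_natDegree hq0, show q.natDegree = 0 by lia]; rfl
  rw [hq]
  exact (irreducible_mul_isUnit hqu).mpr hg

/-- Polynomials in `y` over `𝔽₂[x]` from lists of coefficients. -/
noncomputable def tpL : List ℕ → (ZMod 2)[X][X]
  | [] => 0
  | c :: l => C (tpP c) + X * tpL l

lemma tpL_coeff (l : List ℕ) (j : ℕ) : (tpL l).coeff j = tpP (l.getD j 0) := by
  induction l generalizing j with
  | nil => simp [tpL, tpP_zero]
  | cons c l ih =>
    rw [tpL, coeff_add]
    cases j with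
    | zero => simp
    | succ j => rw [coeff_C_succ, coeff_X_mul, ih]; simp

/-- coefficients of `c + (y + h) * S`. -/
def tpGo (h k : ℕ) (c : ℕ) (S : List ℕ) : List ℕ :=
  List.rec (motive := fun _ => ℕ → List ℕ) (fun c => [c])
    (fun s _ r c => tpForce s (fun s => tpForce (Nat.xor c (tpMul h s k)) (fun e => e :: r s))) S c

lemma tpGo_eq (h k c : ℕ) (S : List ℕ) (hk : h < 2 ^ k) :
    tpL (tpGo h k c S) = C (tpP c) + (X + C (tpP h)) * tpL S := by
  induction S generalizing c with
  | nil => simp [tpGo, tpL]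
  | cons s S ih =>
    have : tpGo h k c (s :: S) = tpForce s (fun s => tpForce (c ^^^ (tpMul h s k))
      (fun e => e :: tpGo h k s S)) := rfl
    rw [this, tpForce_eq, tpForce_eq, tpL, ih, tpL, tpP_xor, tpMul_eq _ _ _ hk, C_add, C_mul]
    ring

def tpTay (h k : ℕ) (l : List ℕ) : List ℕ :=
  List.rec [] (fun c _ r => tpGo h k c r) l

lemma tpTay_eq (h k : ℕ) (l : List ℕ) (hk : h < 2 ^ k) :
    tpL (tpTay h k l) = taylor (tpP h) (tpL l) := by
  induction l with
  | nil => simp [tpTay, tpL]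
  | cons c l ih =>
    have : tpTay h k (c :: l) = tpGo h k c (tpTay h k l) := rfl
    rw [this, tpGo_eq _ _ _ _ hk, ih, tpL, map_add, taylor_C, taylor_mul, taylor_X]

def tpEv (v k : ℕ) (l : List ℕ) : ℕ :=
  List.rec 0 (fun c _ r => tpForce r (fun r => Nat.xor c (tpMul v r k))) l

lemma tpEv_eq (v k : ℕ) (l : List ℕ) (hk : v < 2 ^ k) :
    tpP (tpEv v k l) = (tpL l).eval (tpP v) := by
  induction l with
  | nil => simp [tpEv, tpL, tpP_zero]
  | cons c l ih =>
    have : tpEv v k (c :: l) = tpForce (tpEv v k l) (fun r => c ^^^ (tpMul v r k)) := rfl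
    rw [this, tpForce_eq, tpP_xor, tpMul_eq _ _ _ hk, ih, tpL]
    simp

end Polynomial

namespace Polynomial
open scoped Polynomial

/-- Coefficients (in `y`) of the affine equation of the nef curve of degree `111`. -/
def tpN : List ℕ := [
  0xb349041df6f25cbbac5, 0xbf464a9f30089c03655, 0xaac478297361e63048d, 0x51efc299376c668d978,
  0xbd5146723c391adaa9f, 0x42c5ae2a48897531eed, 0x5f0ee7ae9aefc692f12, 0xe5e6c07300e31398e41,
  0xd78afe45117c6eee4c2, 0xd34d538f6cc33f6bbfa, 0x9da11351841fcbd40c0, 0xfa6c0ad60ed7a127889,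
  0xf118f6d6245b28c0b33, 0x64588ea0ded82e3c758, 0x24940dcd15e2eddd1f9, 0xf93db1a72852437e128,
  0x3e50e6ca9bdd6c93e97, 0x70bf342f34ed5c67c1c, 0xe23a9ec123d363974dc, 0x379d0573a64c2fcd254,
  0xc9fbd58b51ef54a348a, 0x965ae70487c44685f20, 0xc08e10d37bd49a833b0, 0xe844e23980d93fccfbd,
  0x76d277d1502335195f9, 0x44951027624367592, 0xe8170fc5dcd6b7489de, 0xe1f1a27c4e17864a5f2,
  0x8ed9779cfde5d3b4f04, 0x78271969b11a7f1fd37, 0x26b58fcadfea2a51949, 0x732958a3bed19bc4397,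
  0x450290ff98bb3a423b4, 0x7a8235cb0b2b1609fb2, 0x48ecf11d324e1e797ce, 0x63dab4b59125c59cbc7,
  0x2c01e30108adadeca3a, 0x5b74d37fe46e6a3998a, 0x1e73f4add2d5963abdd, 0x1dcbd48f1f6d6bbb82b,
  0x59c124c9453b8b26a8, 0x7bbe428e51be4fda69, 0x2d8c6998447193e7fc, 0x9579ecab56a5f36b2,
  0xd6bb122537c13fad0, 0x7e151f69a793f1943, 0x1119cca5d4d497109, 0x1a3153e806dd5e0c3,
  0x4c44e83d26a99d13, 0x5e187e6a0b5e918c, 0x2f764fab7ab9dfe8, 0x4af5ef36b113beb,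
  0x6d8de674de360ce, 0x668b5869389eed0, 0x1876e25709e8854, 0x894dcc306b059a, 0xa401a2cf907a93,
  0xac52dc6deac15, 0x2d48a3a0338801, 0x1529b8ce8e7a7f, 0x86d569636465f, 0x78471115976db,
  0x2638a96949f37, 0x15e27e7851dc4, 0x779ff4bf3dac, 0x3102b5825dde, 0x1832cd2fce75,
  0x57ccddcd896, 0xa4b9e0518fa, 0x445c43465ec, 0x132370f2ca2, 0xa9d179b09c, 0x19a8cf7404,
  0x1c29030f18, 0x2dcef1059e, 0x1a448ac5c4, 0x6efbb6afc, 0x7aacb0e47, 0x3ce76f69, 0x11ebaf22b,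
  0x4d41f6f6, 0x1d3bd4, 0x7cb2de9, 0x14e38721, 0x1659fb8, 0x710d4da, 0x28a1c57, 0x12f74d9,
  0x9d9ffb, 0x192edf, 0x325114, 0x16a16c, 0x64804, 0x51051, 0x25315, 0x6058, 0x1612, 0x6df7,
  0x1651, 0xb5f, 0x96b, 0x50d, 0x29, 0x61, 0xb3, 0x53, 0x33, 0x6, 0x0, 0x0, 0x2, 0x1]

def tpPi : ℕ := 953
def tpH : ℕ := 210
def tpF : ℕ := 0x187ca2fe65265bc295539479a0b0072897f4e1baf797f8818ac96a0573dfd9bef3e54cfcc2ce4cd70e3d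

set_option maxRecDepth 100000

lemma tpPi_irr : Irreducible (tpP tpPi) := by
  refine tp_irr tpPi 9 (by norm_num) (by decide +kernel) (by decide +kernel) (by decide +kernel) [3]
    (by decide +kernel) ?_
  intro e he h3
  have h4 := h3 3 (by simp)
  have : e ≤ 9 := Nat.le_of_dvd (by norm_num) he
  interval_cases e <;> lia

lemma tpF_irr : Irreducible (tpP tpF) := by
  refine tp_irr tpF 332 (by norm_num) (by decide +kernel) (by decide +kernel) (by decide +kernel)
    [4, 166] (by decide +kernel) ?_
  intro e he h3
  have h4 := h3 4 (by simp)
  have h5 := h3 166 (by simp)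
  have h6 : e ∈ Nat.divisors 332 := by simp [he]
  have h7 : Nat.divisors 332 = {1, 2, 4, 83, 166, 332} := by decide +kernel
  rw [h7] at h6
  simp only [Finset.mem_insert, Finset.mem_singleton] at h6
  rcases h6 with rfl | rfl | rfl | rfl | rfl | rfl <;> lia

lemma tpN_ev : tpEv 13 4 tpN = tpF <<< 1 := by decide +kernel

lemma tpN_len : tpN.length = 112 := by decide +kernel
lemma tpN_tot : ∀ j < 112, tpN.getD j 0 < 2 ^ (112 - j) := by decide +kernel
lemma tpN_x : ∀ j < 112, tpN.getD j 0 < 2 ^ 76 := by decide +kernel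

/-- The list `π ^ j` of powers. -/
def tpPow (k : ℕ) : ℕ := Nat.rec 1 (fun _ r => tpForce r (fun r => tpMul tpPi r 10)) k

/-- Checks that the `j`-th entry is divisible by `π ^ (k - j)`. -/
def tpChk (S : List ℕ) (k : ℕ) : Bool :=
  List.rec (motive := fun _ => ℕ → Bool) (fun _ => true)
    (fun s _ r k => tpForce s fun s => tpForce (tpPow k) fun p =>
      cond (Nat.beq (tpRem p (Nat.mul 9 k) 800 s) 0) (r (Nat.sub k 1)) false) S k

lemma tpN_ord : tpChk (tpTay tpH 8 tpN) 35 = true := by decide +kernel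
lemma tpN_ord' : tpRem (tpPow 36) 324 800 ((tpTay tpH 8 tpN).getD 0 0) ≠ 0 ∧
    tpRem (tpPow 36) 324 800 ((tpTay tpH 8 tpN).getD 0 0) < 2 ^ 324 ∧
    tpPow 36 < 2 ^ (324 + 1) ∧ (tpPow 36).testBit 324 = true := by decide +kernel

end Polynomial

namespace Polynomial
open scoped Polynomial

lemma tpPow_eq (k : ℕ) : tpP (tpPow k) = tpP tpPi ^ k := by
  induction k with
  | zero => exact tpP_one
  | succ k ih =>
    have : tpPow (k + 1) = tpForce (tpPow k) (fun r => tpMul tpPi r 10) := rfl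
    rw [this, tpForce_eq, tpMul_eq _ _ _ (by decide +kernel), ih, pow_succ, mul_comm]

lemma tpRem_zero_dvd (m dg i s : ℕ) (h : tpRem m dg i s = 0) : tpP m ∣ tpP s := by
  have := tpRem_dvd m dg i s
  rwa [h, tpP_zero, sub_zero] at this

lemma tpChk_spec (S : List ℕ) (k : ℕ) (h : tpChk S k = true) (j : ℕ) :
    tpP tpPi ^ (k - j) ∣ tpP (S.getD j 0) := by
  induction S generalizing k j with
  | nil => simp [tpP_zero]
  | cons s S ih =>
    have e : tpChk (s :: S) k = tpForce s fun s => tpForce (tpPow k) fun p =>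
      cond (Nat.beq (tpRem p (9 * k) 800 s) 0) (tpChk S (k - 1)) false := rfl
    rw [e, tpForce_eq, tpForce_eq] at h
    cases hb : Nat.beq (tpRem (tpPow k) (9 * k) 800 s) 0 with
    | false => rw [hb] at h; simp at h
    | true =>
      rw [hb, cond_true] at h
      cases j with
      | zero =>
        rw [← tpPow_eq]
        exact tpRem_zero_dvd _ _ _ _ (Nat.eq_of_beq_eq_true hb)
      | succ j =>
        have := ih (k - 1) h j
        rw [show k - (j + 1) = k - 1 - j by lia]
        simpa using this

/-- The equation of the nef curve. -/
noncomputable def tpn : (ZMod 2)[X][X] := tpL tpN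

lemma tpN_getD_ge (j : ℕ) (hj : 112 ≤ j) : tpN.getD j 0 = 0 := by
  rw [List.getD_eq_default]
  rw [tpN_len]; exact hj

lemma tpn_111 : tpn.coeff 111 = 1 := by
  rw [tpn, tpL_coeff, show tpN.getD 111 0 = 1 by decide +kernel, tpP_one]

lemma tpn_deg : tpn.natDegree = 111 := by
  refine le_antisymm (natDegree_le_iff_coeff_eq_zero.mpr fun j hj => ?_)
    (le_natDegree_of_ne_zero ?_)
  · rw [tpn, tpL_coeff, tpN_getD_ge j hj, tpP_zero]
  · rw [tpn_111]; exact one_ne_zero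

lemma tpn_monic : tpn.Monic := by
  rw [Monic, leadingCoeff, tpn_deg, tpn_111]

lemma tpn_tot : TPW (TPdeg (ZMod 2)) (-1) (-111) tpn := by
  intro j i hi
  rw [tpn, tpL_coeff]
  rcases lt_or_ge j 112 with hj | hj
  · exact tpP_natDegree_lt _ _ (tpN_tot j hj) i (by lia)
  · rw [tpN_getD_ge j hj, tpP_zero, coeff_zero]

lemma tpn_x : TPW (TPdeg (ZMod 2)) 0 (-75) tpn := by
  intro j i hi
  rw [tpn, tpL_coeff]
  rcases lt_or_ge j 112 with hj | hj
  · exact tpP_natDegree_lt _ _ (tpN_x j hj) i (by lia)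
  · rw [tpN_getD_ge j hj, tpP_zero, coeff_zero]

lemma tpn_x' : ¬ TPW (TPdeg (ZMod 2)) 0 (-75 + 1) tpn := by
  intro h
  have h1 := h 0 75 (by norm_num)
  rw [tpn, tpL_coeff, tpP_coeff, show (tpN.getD 0 0).testBit 75 = true by decide +kernel] at h1
  simp at h1

lemma tpn_ord : TPW (TPord (tpP tpPi)) 1 35 (taylor (tpP tpH) tpn) := by
  intro j
  rw [tpn, ← tpTay_eq _ 8 _ (by decide +kernel), tpL_coeff, mem_TPord]
  have := tpChk_spec _ _ tpN_ord j
  rwa [show ((35 : ℤ) - 1 * (j : ℤ)).toNat = 35 - j by lia]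

lemma tp_not_dvd (p r s : ℕ) (k : ℕ) (hr : tpP p ∣ tpP s - tpP r) (a1 : r ≠ 0) (a2 : r < 2 ^ k)
    (a3 : p < 2 ^ (k + 1)) (a4 : p.testBit k = true) : ¬ tpP p ∣ tpP s := by
  intro h1
  have h2 := dvd_sub h1 hr
  rw [sub_sub_cancel] at h2
  have h3 := natDegree_le_of_dvd h2 (tpP_ne_zero _ a1)
  rw [tpP_natDegree _ k a3 a4] at h3
  have h4 := tpP_natDegree_lt _ _ a2 _ h3
  rw [coeff_natDegree, leadingCoeff_eq_zero] at h4
  exact tpP_ne_zero _ a1 h4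

lemma tpn_ord' : ¬ TPW (TPord (tpP tpPi)) 1 (35 + 1) (taylor (tpP tpH) tpn) := by
  intro h
  have h1 := h 0
  rw [tpn, ← tpTay_eq _ 8 _ (by decide +kernel), tpL_coeff, mem_TPord,
    show ((35 : ℤ) + 1 - 1 * ((0 : ℕ) : ℤ)).toNat = 36 by lia, ← tpPow_eq] at h1
  obtain ⟨a1, a2, a3, a4⟩ := tpN_ord'
  exact tp_not_dvd _ _ _ 324 (tpRem_dvd _ _ _ _) a1 a2 a3 a4 h1

lemma tp13_deg : (tpP 13).natDegree = 3 := tpP_natDegree _ _ (by norm_num) (by decide +kernel)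

lemma tp_eval_deg (v : (ZMod 2)[X]) (hv : v.natDegree = 3) (G : (ZMod 2)[X][X]) (e : ℕ)
    (hG : G.natDegree = e)
    (h : TPW (TPdeg (ZMod 2)) (-1) (-e) G) : (G.eval v).natDegree ≤ 3 * e := by
  rw [eval_eq_sum_range]
  refine natDegree_sum_le_of_forall_le _ _ fun j hj => ?_
  have hj' : j ≤ e := by
    have := Finset.mem_range.mp hj
    lia
  refine natDegree_mul_le.trans ?_
  have h1 : (G.coeff j).natDegree ≤ e - j :=
    natDegree_le_iff_coeff_eq_zero.mpr fun i hi => h j i (by lia)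
  have h2 : (v ^ j).natDegree ≤ 3 * j := by
    rw [natDegree_pow, hv]; lia
  lia

lemma tp_key (n : (ZMod 2)[X][X]) (hn : n.natDegree = 111)
    (htot : TPW (TPdeg (ZMod 2)) (-1) (-111) n)
    (G K : (ZMod 2)[X][X]) (hG : G.Monic) (hK : K.Monic) (hGK : G * K = n) :
    TPW (TPdeg (ZMod 2)) (-1) (-(G.natDegree : ℤ)) G := by
  have hD := TPdeg_filt (ZMod 2)
  have hs : G.natDegree + K.natDegree = 111 := by
    rw [← hG.natDegree_mul hK, hGK, hn]
  refine TPW_div hD (-1) (-(K.natDegree : ℤ)) _ K G ?_ ?_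
  · intro hc
    have h1 := hc K.natDegree 0 (by push_cast; lia)
    rw [show K.coeff K.natDegree = 1 from hK] at h1
    simp at h1
  · rw [mul_comm, hGK]
    convert htot using 1
    lia

lemma tp_key2 (n : (ZMod 2)[X][X]) (hn : n.natDegree = 111)
    (htot : TPW (TPdeg (ZMod 2)) (-1) (-111) n) (v P : (ZMod 2)[X]) (hv : v.natDegree = 3)
    (hP : Irreducible P) (hPdeg : P.natDegree = 332) (hev : n.eval v = P * X ^ 1)
    (G K : (ZMod 2)[X][X]) (hG : G.Monic) (hK : K.Monic) (hGK : G * K = n)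
    (hd : P ∣ G.eval v) : K.natDegree = 0 := by
  have hs : G.natDegree + K.natDegree = 111 := by
    rw [← hG.natDegree_mul hK, hGK, hn]
  have hne : G.eval v ≠ 0 := by
    intro hc
    rw [← hGK, eval_mul, hc, zero_mul] at hev
    exact mul_ne_zero hP.ne_zero (pow_ne_zero 1 X_ne_zero) hev.symm
  have h1 := natDegree_le_of_dvd hd hne
  have h2 := tp_eval_deg v hv G _ rfl (tp_key n hn htot G K hG hK hGK)
  rw [hPdeg] at h1
  lia

lemma tp_irr_curve (n : (ZMod 2)[X][X]) (hn : n.natDegree = 111) (hmon : n.Monic)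
    (htot : TPW (TPdeg (ZMod 2)) (-1) (-111) n) (v P : (ZMod 2)[X]) (hv : v.natDegree = 3)
    (hP : Irreducible P) (hPdeg : P.natDegree = 332) (hev : n.eval v = P * X ^ 1) :
    Irreducible n := by
  rw [hmon.irreducible_iff_natDegree]
  refine ⟨?_, fun G K hG hK hGK => ?_⟩
  · intro hc
    rw [hc] at hn
    simp at hn
  · have h1 : P ∣ G.eval v * K.eval v := by
      rw [← eval_mul, hGK, hev]; exact dvd_mul_right _ _
    rcases hP.prime.dvd_or_dvd h1 with h | h
    · right; exact tp_key2 n hn htot v P hv hP hPdeg hev G K hG hK hGK h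
    · left; exact tp_key2 n hn htot v P hv hP hPdeg hev K G hK hG (by rw [mul_comm, hGK]) h

lemma tpn_ev : tpn.eval (tpP 13) = tpP tpF * X ^ 1 := by
  have h1 := tpEv_eq 13 4 tpN (by norm_num)
  have h2 := tpP_shl tpF 1
  rw [tpN_ev] at h1
  exact h1.symm.trans h2

lemma tpF_deg : (tpP tpF).natDegree = 332 :=
  tpP_natDegree _ _ (by decide +kernel) (by decide +kernel)

lemma tpn_irr : Irreducible tpn :=
  tp_irr_curve tpn tpn_deg tpn_monic tpn_tot (tpP 13) (tpP tpF) tp13_deg tpF_irr tpF_deg tpn_ev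

lemma tpPi_deg : (tpP tpPi).natDegree = 9 := tpP_natDegree _ _ (by decide +kernel) (by decide +kernel)

theorem tp_main2 (d m : ℕ) (h : 37 * d < 117 * m) (f : (ZMod 2)[X][X])
    (h1 : TPW (TPdeg (ZMod 2)) (-1) (-d) f) (h2 : TPW (TPdeg (ZMod 2)) 0 (m - d) f)
    (h3 : TPW (TPord (tpP tpPi)) 1 m (taylor (tpP tpH) f)) : f = 0 :=
  TP_nef tpn (tpP tpPi) (tpP tpH) tpn_monic tpn_deg tpn_irr tpPi_irr tpPi_deg tpn_tot tpn_x tpn_x'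
    tpn_ord tpn_ord' d m m f h1 h2 h3 (by lia)

end Polynomial

namespace Polynomial
open scoped Polynomial

lemma tp_mat {ι κ : Type} [Fintype ι] [DecidableEq ι] [Fintype κ] [DecidableEq κ]
    (A : Matrix κ ι ℤ)
    (h2 : ∀ c : ι → ZMod 2, (A.map (Int.castRingHom (ZMod 2))).mulVec c = 0 → c = 0)
    (c : ι → ℂ) (hc : (A.map (Int.castRingHom ℂ)).mulVec c = 0) : c = 0 := by
  have hinj : LinearMap.ker (Matrix.toLin' (A.map (Int.castRingHom (ZMod 2)))) = ⊥ := by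
    rw [LinearMap.ker_eq_bot']
    exact fun v hv => h2 v hv
  obtain ⟨g, hg⟩ := LinearMap.exists_leftInverse_of_injective _ hinj
  set B := LinearMap.toMatrix' g with hB
  have hBA : B * (A.map (Int.castRingHom (ZMod 2))) = 1 := by
    have h3 := congrArg LinearMap.toMatrix' hg
    rw [LinearMap.toMatrix'_comp, LinearMap.toMatrix'_id, LinearMap.toMatrix'_toLin'] at h3
    exact h3
  let B' : Matrix ι κ ℤ := B.map (fun z => (z.val : ℤ))
  have hB' : B'.map (Int.castRingHom (ZMod 2)) = B := by
    ext i j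
    simp [B']
  have hdet : (B' * A).det ≠ 0 := by
    intro h0
    have h4 := congrArg (Int.castRingHom (ZMod 2)) h0
    rw [RingHom.map_det, RingHom.mapMatrix_apply, Matrix.map_mul, hB', hBA, Matrix.det_one,
      map_zero] at h4
    exact one_ne_zero h4
  have hdetC : ((B' * A).map (Int.castRingHom ℂ)).det ≠ 0 := by
    rw [← RingHom.mapMatrix_apply, ← RingHom.map_det]
    simpa using hdet
  refine Matrix.eq_zero_of_mulVec_eq_zero hdetC ?_
  rw [Matrix.map_mul, ← Matrix.mulVec_mulVec, hc, Matrix.mulVec_zero]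

/-- The conditions defining the linear system, over an arbitrary field. -/
def TPCond (M H : ℤ[X]) (d m : ℕ) (K : Type) [Field K] (f : K[X][X]) : Prop :=
  (∀ i j : ℕ, (d < i + j ∨ d < i + m) → (f.coeff j).coeff i = 0) ∧
  ∀ j, (M.map (Int.castRingHom K)) ^ (m - j) ∣
    (taylor (H.map (Int.castRingHom K)) f).coeff j

/-- Index set of the admissible monomials. -/
abbrev TPIx (d m : ℕ) : Type :=
  {p : Fin (d + 1) × Fin (d + 1) // (p.1 : ℕ) + p.2 ≤ d ∧ (p.1 : ℕ) + m ≤ d}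

noncomputable def tpPoly (d m : ℕ) {K : Type} [Field K] (c : TPIx d m → K) : K[X][X] :=
  ∑ p, monomial (p.1.2 : ℕ) (monomial (p.1.1 : ℕ) (c p))

lemma tpPoly_coeff (d m : ℕ) {K : Type} [Field K] (c : TPIx d m → K) (i j : ℕ) :
    ((tpPoly d m c).coeff j).coeff i =
      ∑ p : TPIx d m, if (p.1.2 : ℕ) = j ∧ (p.1.1 : ℕ) = i then c p else 0 := by
  simp only [tpPoly, finsetSum_coeff]
  refine Finset.sum_congr rfl fun p _ => ?_
  rw [coeff_monomial]
  by_cases h1 : (p.1.2 : ℕ) = j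
  · rw [if_pos h1, coeff_monomial]; simp [h1]
  · rw [if_neg h1]; simp [h1]

lemma tpPoly_coeff_in (d m : ℕ) {K : Type} [Field K] (c : TPIx d m → K) (q : TPIx d m) :
    ((tpPoly d m c).coeff q.1.2).coeff q.1.1 = c q := by
  rw [tpPoly_coeff, Finset.sum_eq_single q]
  · simp
  · intro p _ hp
    rw [if_neg]
    rintro ⟨h1, h2⟩
    exact hp (Subtype.ext (Prod.ext (Fin.ext h2) (Fin.ext h1)))
  · simp

lemma tpPoly_coeff_out (d m : ℕ) {K : Type} [Field K] (c : TPIx d m → K) (i j : ℕ)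
    (h : d < i + j ∨ d < i + m) : ((tpPoly d m c).coeff j).coeff i = 0 := by
  rw [tpPoly_coeff]
  refine Finset.sum_eq_zero fun p _ => ?_
  rw [if_neg]
  rintro ⟨h1, h2⟩
  have := p.2
  lia

noncomputable def tpA (M H : ℤ[X]) (d m : ℕ) :
    Matrix (Fin m × Fin (9 * m)) (TPIx d m) ℤ :=
  fun k p => ((taylor H (monomial (p.1.2 : ℕ) (X ^ (p.1.1 : ℕ)))).coeff k.1 %ₘ
    M ^ (m - k.1)).coeff k.2

lemma tpA_mulVec (M H : ℤ[X]) (hM : M.Monic) (d m : ℕ) {K : Type} [Field K] (c : TPIx d m → K)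
    (k : Fin m × Fin (9 * m)) :
    ((tpA M H d m).map (Int.castRingHom K)).mulVec c k =
      ((taylor (H.map (Int.castRingHom K)) (tpPoly d m c)).coeff k.1 %ₘ
        (M.map (Int.castRingHom K)) ^ (m - k.1)).coeff k.2 := by
  have hMk : (M ^ (m - k.1)).Monic := hM.pow _
  have e1 : (taylor (H.map (Int.castRingHom K)) (tpPoly d m c)).coeff k.1 %ₘ
        (M.map (Int.castRingHom K)) ^ (m - k.1) = ∑ p : TPIx d m, c p •
        (((taylor H (monomial (p.1.2 : ℕ) (X ^ (p.1.1 : ℕ)))).coeff k.1 %ₘ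
    M ^ (m - k.1)).map (Int.castRingHom K)) := by
    rw [tpPoly, map_sum, finsetSum_coeff]
    change modByMonicHom _ _ = _
    rw [map_sum]
    refine Finset.sum_congr rfl fun p _ => ?_
    change _ %ₘ _ = _
    rw [map_modByMonic _ hMk, Polynomial.map_pow, ← smul_modByMonic]
    congr 1
    have e2 : (monomial (p.1.2 : ℕ) (monomial (p.1.1 : ℕ) (c p)) : K[X][X]) =
        (C (c p)) • ((monomial (p.1.2 : ℕ) (X ^ (p.1.1 : ℕ)) : ℤ[X][X]).map
          (mapRingHom (Int.castRingHom K))) := by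
      rw [map_monomial, smul_monomial, coe_mapRingHom, Polynomial.map_pow, map_X, smul_eq_mul,
        C_mul_X_pow_eq_monomial]
    rw [e2, map_smul, coeff_smul, ← coe_mapRingHom, ← map_taylor, coeff_map, smul_eq_mul,
      coe_mapRingHom, ← smul_eq_C_mul]
  rw [e1, finsetSum_coeff]
  simp only [Matrix.mulVec, dotProduct, Matrix.map_apply, tpA, coeff_smul, coeff_map, smul_eq_mul]
  exact Finset.sum_congr rfl fun p _ => mul_comm _ _

theorem tp_lift (M H : ℤ[X]) (hM : M.Monic) (hM9 : M.natDegree = 9) (d m : ℕ)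
    (h2 : ∀ f : (ZMod 2)[X][X], TPCond M H d m (ZMod 2) f → f = 0)
    (f : ℂ[X][X]) (hf : TPCond M H d m ℂ f) : f = 0 := by
  classical
  have key := tp_mat (tpA M H d m) ?_
  · let c : TPIx d m → ℂ := fun p => (f.coeff p.1.2).coeff p.1.1
    have hfc : f = tpPoly d m c := by
      ext j i
      by_cases h : d < i + j ∨ d < i + m
      · rw [hf.1 i j h, tpPoly_coeff_out _ _ _ _ _ h]
      · push Not at h
        have := tpPoly_coeff_in d m c
          ⟨(⟨i, by lia⟩, ⟨j, by lia⟩), by simpa using h.1, by simpa using h.2⟩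
        simp only at this
        rw [this]
    have hc : c = 0 := by
      refine key c ?_
      funext k
      rw [tpA_mulVec M H hM, ← hfc,
        (modByMonic_eq_zero_iff_dvd ((hM.map _).pow _)).mpr (hf.2 k.1)]
      simp
    rw [hfc, hc]
    simp [tpPoly]
  · intro c hc
    have hz : tpPoly d m c = 0 := by
      refine h2 _ ⟨fun i j h => tpPoly_coeff_out _ _ _ _ _ h, fun j => ?_⟩
      rcases lt_or_ge j m with hj | hj
      · have hmon := (hM.map (Int.castRingHom (ZMod 2))).pow (m - j)
        rw [← modByMonic_eq_zero_iff_dvd hmon]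
        ext e
        rw [coeff_zero]
        rcases lt_or_ge e (9 * m) with he | he
        · have := congrFun hc (⟨j, hj⟩, ⟨e, he⟩)
          rwa [tpA_mulVec M H hM] at this
        · refine coeff_eq_zero_of_degree_lt ((degree_modByMonic_lt _ hmon).trans_le ?_)
          refine degree_le_natDegree.trans ?_
          rw [natDegree_pow, hM.natDegree_map, hM9]
          exact_mod_cast (by lia : (m - j) * 9 ≤ e)
      · rw [Nat.sub_eq_zero_of_le hj, pow_zero]; exact one_dvd _
    funext p
    rw [← tpPoly_coeff_in d m c p, hz]
    simp

theorem tp_mainC (M H : ℤ[X]) (hM : M.Monic) (hM9 : M.natDegree = 9)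
    (hM2 : M.map (Int.castRingHom (ZMod 2)) = tpP tpPi)
    (hH2 : H.map (Int.castRingHom (ZMod 2)) = tpP tpH)
    (d m : ℕ) (h : 37 * d < 117 * m) (f : ℂ[X][X]) (hf : TPCond M H d m ℂ f) : f = 0 := by
  refine tp_lift M H hM hM9 d m (fun g hg => ?_) f hf
  obtain ⟨h1, h3⟩ := hg
  rw [hM2, hH2] at h3
  refine tp_main2 d m h g (fun j i hi => h1 i j (by lia)) (fun j i hi => h1 i j (by lia))
    fun j => ?_
  rw [mem_TPord]
  convert h3 j using 2
  lia

end Polynomial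

namespace Polynomial
open scoped Polynomial

lemma tp_coeff_of_deriv (m : ℕ) : ∀ (G : MvPolynomial (Fin 3) ℂ),
    (∀ L : List (Fin 3), L.length < m →
      MvPolynomial.coeff 0 (L.foldr (fun i G => MvPolynomial.pderiv i G) G) = 0) →
    ∀ s : Fin 3 →₀ ℕ, s.degree < m → MvPolynomial.coeff s G = 0 := by
  induction m with
  | zero => intro G _ s hs; omega
  | succ m ih =>
    intro G hG s hs
    by_cases h0 : s = 0
    · rw [h0]; exact hG [] (by simp)
    · obtain ⟨i, hi⟩ : ∃ i, s i ≠ 0 := by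
        by_contra hc
        push Not at hc
        exact h0 (Finsupp.ext hc)
      have hs1 : s - Finsupp.single i 1 + Finsupp.single i 1 = s := by
        apply tsub_add_cancel_of_le
        rw [Finsupp.single_le_iff]
        omega
      have h2 := ih (MvPolynomial.pderiv i G) (fun L hL => by
        have := hG (L ++ [i]) (by simpa using hL)
        simpa using this) (s - Finsupp.single i 1) (by
          have := congrArg Finsupp.degree hs1
          rw [map_add, Finsupp.degree_single] at this
          omega)
      rw [MvPolynomial.coeff_pderiv, hs1] at h2
      rcases mul_eq_zero.mp h2 with h3 | h3
      · exact h3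
      · exfalso
        exact Nat.cast_add_one_ne_zero _ h3

lemma tp_pderiv_trans (p : Fin 3 → ℂ) (i : Fin 3) (F : MvPolynomial (Fin 3) ℂ) :
    MvPolynomial.pderiv i
      (MvPolynomial.aeval (fun k => MvPolynomial.C (p k) + MvPolynomial.X k :
        Fin 3 → MvPolynomial (Fin 3) ℂ) F) =
    MvPolynomial.aeval (fun k => MvPolynomial.C (p k) + MvPolynomial.X k :
        Fin 3 → MvPolynomial (Fin 3) ℂ) (MvPolynomial.pderiv i F) := by
  induction F using MvPolynomial.induction_on with
  | C a => simp [MvPolynomial.algebraMap_eq]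
  | add f g hf hg => rw [map_add, map_add, map_add, map_add, hf, hg]
  | mul_X f k hf =>
    simp only [map_mul, MvPolynomial.aeval_X, Derivation.leibniz, hf, map_add,
      MvPolynomial.pderiv_C, MvPolynomial.pderiv_X, smul_eq_mul]
    by_cases h : k = i
    · subst h; simp
    · simp [h]

lemma tp_foldr_trans (p : Fin 3 → ℂ) (F : MvPolynomial (Fin 3) ℂ) (L : List (Fin 3)) :
    L.foldr (fun i G => MvPolynomial.pderiv i G)
      (MvPolynomial.aeval (fun k => MvPolynomial.C (p k) + MvPolynomial.X k :
        Fin 3 → MvPolynomial (Fin 3) ℂ) F) =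
    MvPolynomial.aeval (fun k => MvPolynomial.C (p k) + MvPolynomial.X k :
        Fin 3 → MvPolynomial (Fin 3) ℂ) (L.foldr (fun i G => MvPolynomial.pderiv i G) F) := by
  induction L with
  | nil => rfl
  | cons i L ih => rw [List.foldr_cons, List.foldr_cons, ih, tp_pderiv_trans]

lemma tp_vanish {F : MvPolynomial (Fin 3) ℂ} {m : ℕ} {p : Fin 3 → ℂ}
    (hF : VanishToOrder F m p) {S : Type} [CommRing S] [Algebra ℂ S] (I : Ideal S)
    (u : Fin 3 → S) (hu : ∀ i, u i ∈ I) :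
    MvPolynomial.aeval (fun k => algebraMap ℂ S (p k) + u k) F ∈ I ^ m := by
  set G := MvPolynomial.aeval (fun k => MvPolynomial.C (p k) + MvPolynomial.X k :
        Fin 3 → MvPolynomial (Fin 3) ℂ) F with hG
  have h1 : G ∈ MvPolynomial.idealOfVars (Fin 3) ℂ ^ m := by
    rw [MvPolynomial.mem_pow_idealOfVars_iff']
    apply tp_coeff_of_deriv
    intro L hL
    rw [hG, tp_foldr_trans]
    have h2 := hF L hL
    rw [← MvPolynomial.constantCoeff_eq, ← h2]
    generalize L.foldr (fun i G => MvPolynomial.pderiv i G) F = Q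
    have : (MvPolynomial.constantCoeff.comp
      (MvPolynomial.aeval (fun k => MvPolynomial.C (p k) + MvPolynomial.X k :
        Fin 3 → MvPolynomial (Fin 3) ℂ)).toRingHom) = MvPolynomial.eval p := by
      apply MvPolynomial.ringHom_ext
      · intro r; simp [MvPolynomial.algebraMap_eq]
      · intro i; simp
    exact congrArg (fun φ => φ Q) this
  have h3 : MvPolynomial.aeval (fun k => algebraMap ℂ S (p k) + u k) F
      = MvPolynomial.aeval u G := by
    have : MvPolynomial.aeval (fun k => algebraMap ℂ S (p k) + u k) =
      (MvPolynomial.aeval u).comp (MvPolynomial.aeval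
        (fun k => MvPolynomial.C (p k) + MvPolynomial.X k :
        Fin 3 → MvPolynomial (Fin 3) ℂ)) := by
      apply MvPolynomial.algHom_ext
      intro i
      simp
    rw [this]; rfl
  rw [h3]
  have h4 := Ideal.mem_map_of_mem (MvPolynomial.aeval u : MvPolynomial (Fin 3) ℂ →ₐ[ℂ] S) h1
  rw [Ideal.map_pow] at h4
  refine Ideal.pow_right_mono ?_ m h4
  rw [Ideal.map_span, Ideal.span_le]
  rintro _ ⟨_, ⟨i, rfl⟩, rfl⟩
  simpa using hu i

lemma tp_pow_ideal (v : ℂ[X]) (I : Ideal ℂ[X][X]) (hI : I = Ideal.span {C v, X}) (m : ℕ) :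
    ∀ g : ℂ[X][X], g ∈ I ^ m → ∀ j, v ^ (m - j) ∣ g.coeff j := by
  induction m with
  | zero => intro g _ j; simp
  | succ m ih =>
    intro g hg
    rw [Submodule.pow_succ] at hg
    refine Submodule.mul_induction_on hg ?_ ?_
    · intro a ha b hb j
      rw [hI] at hb
      obtain ⟨x, y, rfl⟩ := Ideal.mem_span_pair.mp hb
      have hax : ∀ c : ℂ[X][X], ∀ j, v ^ (m - j) ∣ (a * c).coeff j :=
        fun c => ih _ (Ideal.mul_mem_right _ _ ha)
      have e : a * (x * C v + y * X) = C v * (a * x) + (a * y) * X := by ring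
      rw [e, coeff_add, coeff_C_mul]
      apply dvd_add
      · have := mul_dvd_mul_left v (hax x j)
        refine dvd_trans ?_ this
        rw [← _root_.pow_succ']
        exact pow_dvd_pow _ (by omega)
      · cases j with
        | zero => simp
        | succ j =>
          rw [coeff_mul_X]
          refine dvd_trans (pow_dvd_pow _ (by omega)) (hax y j)
    · intro a b ha hb j
      rw [coeff_add]
      exact dvd_add (ha j) (hb j)

end Polynomial

namespace Polynomial
open scoped Polynomial

lemma tp_f_coeff (F : MvPolynomial (Fin 3) ℂ) (i j : ℕ) :
    ((MvPolynomial.aeval (![1, X, C X] : Fin 3 → ℂ[X][X]) F).coeff j).coeff i =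
    ∑ s ∈ F.support, if s 1 = j ∧ s 2 = i then MvPolynomial.coeff s F else 0 := by
  rw [MvPolynomial.aeval_def, MvPolynomial.eval₂_eq', finsetSum_coeff, finsetSum_coeff]
  refine Finset.sum_congr rfl fun s _ => ?_
  have e : algebraMap ℂ ℂ[X][X] (MvPolynomial.coeff s F) *
      ∏ i, (![1, X, C X] : Fin 3 → ℂ[X][X]) i ^ s i =
      C (C (MvPolynomial.coeff s F) * X ^ (s 2)) * X ^ (s 1) := by
    simp only [Fin.prod_univ_three, Matrix.cons_val_zero, Matrix.cons_val_one, Matrix.cons_val,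
      one_pow, one_mul, map_mul, map_pow]
    have : algebraMap ℂ ℂ[X][X] (MvPolynomial.coeff s F) = C (C (MvPolynomial.coeff s F)) := rfl
    rw [this]; ring
  rw [e, coeff_C_mul_X_pow]
  by_cases h1 : j = s 1
  · subst h1
    rw [if_pos rfl, coeff_C_mul_X_pow]
    by_cases h2 : i = s 2
    · subst h2; simp
    · simp [h2, Ne.symm h2]
  · simp [h1, Ne.symm h1]

lemma tp_g_coeff (F : MvPolynomial (Fin 3) ℂ) (k j : ℕ) :
    ((MvPolynomial.aeval (![X, X * C X, 1] : Fin 3 → ℂ[X][X]) F).coeff k).coeff j =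
    ∑ s ∈ F.support, if s 0 + s 1 = k ∧ s 1 = j then MvPolynomial.coeff s F else 0 := by
  rw [MvPolynomial.aeval_def, MvPolynomial.eval₂_eq', finsetSum_coeff, finsetSum_coeff]
  refine Finset.sum_congr rfl fun s _ => ?_
  have e : algebraMap ℂ ℂ[X][X] (MvPolynomial.coeff s F) *
      ∏ i, (![X, X * C X, 1] : Fin 3 → ℂ[X][X]) i ^ s i =
      C (C (MvPolynomial.coeff s F) * X ^ (s 1)) * X ^ (s 0 + s 1) := by
    simp only [Fin.prod_univ_three, Matrix.cons_val_zero, Matrix.cons_val_one, Matrix.cons_val,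
      one_pow, mul_one, map_mul, map_pow]
    have : algebraMap ℂ ℂ[X][X] (MvPolynomial.coeff s F) = C (C (MvPolynomial.coeff s F)) := rfl
    rw [this]; ring
  rw [e, coeff_C_mul_X_pow]
  by_cases h1 : k = s 0 + s 1
  · subst h1
    rw [if_pos rfl, coeff_C_mul_X_pow]
    by_cases h2 : j = s 1
    · subst h2; simp
    · simp [h2, Ne.symm h2]
  · simp [h1, Ne.symm h1]

lemma tp_hom_deg {F : MvPolynomial (Fin 3) ℂ} {d : ℕ} (hF : F.IsHomogeneous d)
    {s : Fin 3 →₀ ℕ} (hs : s ∈ F.support) : s 0 + s 1 + s 2 = d := by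
  have h1 := hF (MvPolynomial.mem_support_iff.mp hs)
  have h2 : Finsupp.degree s = d := by
    rw [← h1, Finsupp.degree_eq_weight_one]; rfl
  rw [Finsupp.degree_eq_sum, Fin.sum_univ_three] at h2
  exact h2

lemma tp_F_zero {F : MvPolynomial (Fin 3) ℂ} {d : ℕ} (hF : F.IsHomogeneous d)
    (hf : MvPolynomial.aeval (![1, X, C X] : Fin 3 → ℂ[X][X]) F = 0) : F = 0 := by
  by_contra hne
  obtain ⟨s, hs⟩ := MvPolynomial.support_nonempty.mpr hne
  have h1 := tp_f_coeff F (s 2) (s 1)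
  rw [hf, Finset.sum_eq_single s] at h1
  · simp only [coeff_zero, and_self, if_true] at h1
    exact MvPolynomial.mem_support_iff.mp hs h1.symm
  · intro t ht hts
    rw [if_neg]
    rintro ⟨h2, h3⟩
    apply hts
    have := tp_hom_deg hF hs
    have := tp_hom_deg hF ht
    ext k
    fin_cases k
    · show t 0 = s 0
      omega
    · exact h2
    · exact h3
  · intro h; exact absurd hs h

lemma tp_cond1 {F : MvPolynomial (Fin 3) ℂ} {d m : ℕ} (hF : F.IsHomogeneous d)
    (hV : VanishToOrder F m ![0, 0, 1]) (i j : ℕ) (hij : d < i + j ∨ d < i + m) :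
    ((MvPolynomial.aeval (![1, X, C X] : Fin 3 → ℂ[X][X]) F).coeff j).coeff i = 0 := by
  by_cases h : d < i + j
  · rw [tp_f_coeff]
    refine Finset.sum_eq_zero fun s hs => ?_
    rw [if_neg]
    have := tp_hom_deg hF hs
    omega
  · have e : ((MvPolynomial.aeval (![1, X, C X] : Fin 3 → ℂ[X][X]) F).coeff j).coeff i =
      ((MvPolynomial.aeval (![X, X * C X, 1] : Fin 3 → ℂ[X][X]) F).coeff (d - i)).coeff j := by
      rw [tp_f_coeff, tp_g_coeff]
      refine Finset.sum_congr rfl fun s hs => ?_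
      have := tp_hom_deg hF hs
      congr 1
      apply propext
      omega
    rw [e]
    have h1 := tp_vanish hV (Ideal.span {(X : ℂ[X][X])}) ![X, X * C X, 0] (by
      intro k
      rw [Ideal.mem_span_singleton]
      fin_cases k <;> simp)
    have h2 : (fun k => algebraMap ℂ ℂ[X][X] ((![0, 0, 1] : Fin 3 → ℂ) k) +
        (![X, X * C X, 0] : Fin 3 → ℂ[X][X]) k) = ![X, X * C X, 1] := by
      funext k
      fin_cases k <;> simp
    rw [h2, Ideal.span_singleton_pow, Ideal.mem_span_singleton, X_pow_dvd_iff] at h1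
    rw [h1 (d - i) (by omega), coeff_zero]

lemma tp_cond2 {F : MvPolynomial (Fin 3) ℂ} {m : ℕ} (H : ℂ[X]) (α : ℂ)
    (hV : VanishToOrder F m ![1, H.eval α, α]) (j : ℕ) :
    (X - C α) ^ (m - j) ∣
      (taylor H (MvPolynomial.aeval (![1, X, C X] : Fin 3 → ℂ[X][X]) F)).coeff j := by
  refine tp_pow_ideal _ _ rfl m _ ?_ j
  have h1 := tp_vanish hV (Ideal.span {C (X - C α), (X : ℂ[X][X])})
    ![0, X + C (H - C (H.eval α)), C (X - C α)] (by
      intro k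
      fin_cases k
      · simp
      · refine Ideal.add_mem _ (Ideal.subset_span (by simp)) ?_
        obtain ⟨q, hq⟩ := X_sub_C_dvd_sub_C_eval (a := α) (p := H)
        rw [hq, map_mul]
        exact Ideal.mul_mem_right _ _ (Ideal.subset_span (by simp))
      · exact Ideal.subset_span (by simp))
  have h2 : (fun k => algebraMap ℂ ℂ[X][X] ((![1, H.eval α, α] : Fin 3 → ℂ) k) +
      (![0, X + C (H - C (H.eval α)), C (X - C α)] : Fin 3 → ℂ[X][X]) k)
      = ![1, X + C H, C X] := by
    have ha : ∀ z : ℂ, algebraMap ℂ ℂ[X][X] z = C (C z) := fun _ => rfl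
    funext k
    fin_cases k
    · simp
    · simp only [ha, Fin.mk_one, Matrix.cons_val_one, Matrix.cons_val_zero, map_sub]
      ring
    · simp [ha]
  rw [h2] at h1
  convert h1 using 1
  have : ((taylorAlgHom H).restrictScalars ℂ).comp
      (MvPolynomial.aeval (![1, X, C X] : Fin 3 → ℂ[X][X])) =
      MvPolynomial.aeval (![1, X + C H, C X] : Fin 3 → ℂ[X][X]) := by
    apply MvPolynomial.algHom_ext
    intro k
    fin_cases k <;> simp
  rw [← this]; rfl

lemma tp_lift_exists : ∃ M H : ℤ[X], M.Monic ∧ M.natDegree = 9 ∧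
    M.map (Int.castRingHom (ZMod 2)) = tpP tpPi ∧
    H.map (Int.castRingHom (ZMod 2)) = tpP tpH := by
  have hs : Function.Surjective (Int.castRingHom (ZMod 2)) := ZMod.intCast_surjective
  obtain ⟨H, hH⟩ := Polynomial.map_surjective _ hs (tpP tpH)
  obtain ⟨M0, hM0⟩ := Polynomial.map_surjective _ hs (tpP tpPi)
  have hmon : (tpP tpPi).Monic := by
    rcases (show ∀ z : ZMod 2, z = 0 ∨ z = 1 by decide) (tpP tpPi).leadingCoeff with h | h
    · exact absurd (leadingCoeff_eq_zero.mp h) tpPi_irr.ne_zero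
    · exact h
  obtain ⟨M, h1, h2, h3⟩ := lifts_and_natDegree_eq_and_monic
    ((mem_lifts _).mpr ⟨M0, hM0⟩) hmon
  exact ⟨M, H, h3, h2.trans tpPi_deg, h1, hH⟩

lemma tp_roots (M : ℤ[X]) (hM : M.Monic) (hM9 : M.natDegree = 9)
    (hM2 : M.map (Int.castRingHom (ZMod 2)) = tpP tpPi) :
    ∃ α : Fin 9 → ℂ, Function.Injective α ∧
      M.map (Int.castRingHom ℂ) = ∏ i, (X - C (α i)) := by
  have h1 : Irreducible M := by
    refine hM.irreducible_of_irreducible_map (Int.castRingHom (ZMod 2)) M ?_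
    rw [hM2]; exact tpPi_irr
  have h2 : Irreducible (M.map (Int.castRingHom ℚ)) :=
    (IsPrimitive.Int.irreducible_iff_irreducible_map_cast hM.isPrimitive).mp h1
  have h3 := h2.separable
  have h4 : (M.map (Int.castRingHom ℂ)).Separable := by
    have := h3.map (f := algebraMap ℚ ℂ)
    rw [Polynomial.map_map, RingHom.ext_int ((algebraMap ℚ ℂ).comp (Int.castRingHom ℚ))
      (Int.castRingHom ℂ)] at this
    exact this
  have h5 : (M.map (Int.castRingHom ℂ)).Splits := IsAlgClosed.splits _
  have hmon : (M.map (Int.castRingHom ℂ)).Monic := hM.map _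
  have h6 : (M.map (Int.castRingHom ℂ)).roots.Nodup := nodup_roots h4
  have h7 : (M.map (Int.castRingHom ℂ)).roots.toFinset.card = 9 := by
    rw [Multiset.toFinset_card_of_nodup h6, ← h5.natDegree_eq_card_roots, hM.natDegree_map, hM9]
  let e := (Finset.equivFinOfCardEq h7).symm
  refine ⟨fun i => e i, fun a b hab => e.injective (Subtype.ext hab), ?_⟩
  have h8 := h5.eq_prod_roots_of_monic hmon
  conv_lhs => rw [h8]
  rw [e.prod_comp (fun x => X - C (x : ℂ))]
  rw [Finset.prod_coe_sort _ (fun x : ℂ => (X - C x : ℂ[X])), Finset.prod, Multiset.toFinset_val,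
    h6.dedup]

end Polynomial

/-- If `37 d < 117 m`, there are ten points of `ℂ³ \ {0}`, pairwise non-proportional
(hence ten distinct points of `ℙ²(ℂ)`), such that the only homogeneous polynomial of
degree `d` with multiplicity at least `m` at each of them is the zero polynomial:
the linear system `𝓛_d(m^10)` with ten general base points is empty. -/
theorem emptiness_ten_points (d m : ℕ) (hd : 0 < d) (hm : 0 < m)
    (h : 37 * d < 117 * m) :
    ∃ p : Fin 10 → Fin 3 → ℂ,
      (∀ i, p i ≠ 0) ∧
      (∀ i j, i ≠ j → ¬ ∃ c : ℂ, p j = c • p i) ∧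
      (∀ F : MvPolynomial (Fin 3) ℂ, F.IsHomogeneous d →
        (∀ i, VanishToOrder F m (p i)) → F = 0) := by
  obtain ⟨M, H, hM, hM9, hM2, hH2⟩ := Polynomial.tp_lift_exists
  obtain ⟨α, hα, hMα⟩ := Polynomial.tp_roots M hM hM9 hM2
  set Hc := H.map (Int.castRingHom ℂ) with hHc
  let p : Fin 10 → Fin 3 → ℂ :=
    Fin.snoc (α := fun _ => Fin 3 → ℂ) (fun i : Fin 9 => ![1, Hc.eval (α i), α i]) ![0, 0, 1]
  have p1 : ∀ i : Fin 9, p i.castSucc = ![1, Hc.eval (α i), α i] := fun i => by simp [p]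
  have p2 : p (Fin.last 9) = ![0, 0, 1] := Fin.snoc_last (α := fun _ => Fin 3 → ℂ) _ _
  refine ⟨p, ?_, ?_, ?_⟩
  · intro i
    refine Fin.lastCases ?_ (fun i => ?_) i
    · rw [p2]; intro h0; simpa using congrFun h0 2
    · rw [p1]; intro h0; simpa using congrFun h0 0
  · intro i j
    refine Fin.lastCases ?_ (fun i => ?_) i
    · refine Fin.lastCases ?_ (fun j => ?_) j
      · intro h0; exact absurd rfl h0
      · rintro - ⟨c, hc⟩
        rw [p1, p2] at hc
        simpa using congrFun hc 0
    · refine Fin.lastCases ?_ (fun j => ?_) j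
      · rintro - ⟨c, hc⟩
        rw [p1, p2] at hc
        have h0 : c = 0 := by simpa using (congrFun hc 0).symm
        have := congrFun hc 2
        simp [h0] at this
      · rintro hij ⟨c, hc⟩
        rw [p1, p1] at hc
        have h0 : c = 1 := by simpa using (congrFun hc 0).symm
        have h2 := congrFun hc 2
        simp only [h0, one_smul] at h2
        have h3 : α j = α i := by simpa using h2
        exact hij (by rw [hα h3])
  · intro F hF hV
    refine Polynomial.tp_F_zero hF (Polynomial.tp_mainC M H hM hM9 hM2 hH2 d m h _ ⟨?_, ?_⟩)
    · intro i j hij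
      have h9 := hV (Fin.last 9)
      rw [p2] at h9
      exact Polynomial.tp_cond1 hF h9 i j hij
    · intro j
      rw [hMα, ← Finset.prod_pow]
      refine Finset.prod_dvd_of_coprime ?_ ?_
      · intro a _ b _ hab
        exact (Polynomial.pairwise_coprime_X_sub_C hα hab).pow
      · intro i _
        have h9 := hV i.castSucc
        rw [p1] at h9
        exact Polynomial.tp_cond2 Hc (α i) h9 j
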